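/- Let E be the Euclidean space ℝⁿ, let F, G : E → ℝ be convex functions, let S ⊆ E be a set, and let h₀ ∈ S with F(h₀) ≥ 0 and G(h₀) > 0. Set μ = F(h₀)/G(h₀). Suppose s ∈ E is a subgradient of G at h₀, and suppose h' ∈ S minimises Φ(h) = F(h) − μ·⟨h − h₀, s⟩ + ‖h − h₀‖² over S. Then F(h') + ‖h' − h₀‖² ≤ μ·G(h'). (Key inequality in the proof of the sufficient decrease lemma.) -/

import Mathlib

/-!
By the subgradient inequality, `Φ h - μ * G h₀` majorises `F h - μ * G h + ‖h - h₀‖ ^ 2`, with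
equality at `h₀`, where both sides equal `F h₀ - μ * G h₀ = 0`. Hence any `h'` with `Φ h' ≤ Φ h₀`,
in particular a minimiser of `Φ` over a set containing `h₀`, makes the minorant nonpositive.
-/

open scoped RealInnerProductSpace

section ProximalSurrogate

variable {E : Type*} [SeminormedAddCommGroup E] [InnerProductSpace ℝ E]

/-- `s` is a subgradient of `G` at `h₀`, i.e. `s` belongs to the subdifferential of `G` at `h₀`;
the dual vector is represented by `s` through the inner product. -/
def IsSubgradientAt (G : E → ℝ) (s h₀ : E) : Prop :=
  ∀ h, G h₀ + ⟪s, h - h₀⟫ ≤ G h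

/-- The objective `Φ` of the update step: `F` minus `μ` times the linear part given by `s`, plus
the proximal term centred at `h₀`. -/
def proximalSurrogate (F : E → ℝ) (μ : ℝ) (s h₀ h : E) : ℝ :=
  F h - μ * ⟪h - h₀, s⟫ + ‖h - h₀‖ ^ 2

variable {F G : E → ℝ} {μ : ℝ} {s h₀ h' : E}

lemma proximalSurrogate_self : proximalSurrogate F μ s h₀ h₀ = F h₀ := by
  simp [proximalSurrogate]

lemma IsSubgradientAt.le_proximalSurrogate_sub (hs : IsSubgradientAt G s h₀) (hμ : 0 ≤ μ) (h : E) :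
    F h - μ * G h + ‖h - h₀‖ ^ 2 ≤ proximalSurrogate F μ s h₀ h - μ * G h₀ := by
  have hscaled : μ * (G h₀ + ⟪h - h₀, s⟫) ≤ μ * G h := by
    rw [real_inner_comm]
    exact mul_le_mul_of_nonneg_left (hs h) hμ
  rw [proximalSurrogate]
  linarith

theorem key_inequality_general (hs : IsSubgradientAt G s h₀) (hμ : 0 ≤ μ)
    (hFG : F h₀ ≤ μ * G h₀)
    (hdescent : proximalSurrogate F μ s h₀ h' ≤ proximalSurrogate F μ s h₀ h₀) :
    F h' + ‖h' - h₀‖ ^ 2 ≤ μ * G h' := by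
  have hnonpos : F h' - μ * G h' + ‖h' - h₀‖ ^ 2 ≤ 0 :=
    calc
      F h' - μ * G h' + ‖h' - h₀‖ ^ 2
        ≤ proximalSurrogate F μ s h₀ h' - μ * G h₀ := hs.le_proximalSurrogate_sub hμ h'
      _ ≤ proximalSurrogate F μ s h₀ h₀ - μ * G h₀ := sub_le_sub_right hdescent _
      _ = F h₀ - μ * G h₀ := by rw [proximalSurrogate_self]
      _ ≤ 0 := sub_nonpos.mpr hFG
  linarith

end ProximalSurrogate

/-- Key inequality in the proof of the sufficient decrease lemma. -/
theorem key_inequality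
    {n : ℕ}
    (F G : EuclideanSpace ℝ (Fin n) → ℝ)
    (hF : ConvexOn ℝ Set.univ F) (hG : ConvexOn ℝ Set.univ G)
    (S : Set (EuclideanSpace ℝ (Fin n))) (h₀ : EuclideanSpace ℝ (Fin n)) (hh₀ : h₀ ∈ S)
    (hF₀ : 0 ≤ F h₀) (hG₀ : 0 < G h₀)
    (μ : ℝ) (hμ : μ = F h₀ / G h₀)
    (s : EuclideanSpace ℝ (Fin n)) (hs : ∀ h, G h ≥ G h₀ + ⟪s, h - h₀⟫)
    (h' : EuclideanSpace ℝ (Fin n)) (hh' : h' ∈ S)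
    (hmin : ∀ h ∈ S,
      F h' - μ * ⟪h' - h₀, s⟫ + ‖h' - h₀‖ ^ 2 ≤
        F h - μ * ⟪h - h₀, s⟫ + ‖h - h₀‖ ^ 2) :
    F h' + ‖h' - h₀‖ ^ 2 ≤ μ * G h' :=
  key_inequality_general hs (hμ ▸ div_nonneg hF₀ hG₀.le)
    (hμ ▸ (div_mul_cancel₀ (F h₀) hG₀.ne').ge) (hmin h₀ hh₀)
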